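/- For any μ ∈ (0,∞) and any probability measure P on ℤ_+ × [0,1] with 0 < P_{10}, P_{21} < ∞ and P_{32}, P_{43} < ∞, the random variables (D*_1, D*_2) = (1 + D_1 + D'_1, 1 + D_2 + D'_2) satisfy Cor(D*_1, D*_2) = [P_{21}(P_{43} + P_{33}) − P_{32}²] / [P_{21}(P_{43} + P_{32}) − P_{32}² + μ P_{21}² (P_{21} + P_{32})]. -/

import Mathlib

open MeasureTheory ProbabilityTheory Filter
open scoped ENNReal Topology Classical

noncomputable section

/-- The binomial probability mass function `Bin(x,y)(s)`. -/
def binP (x : ℕ) (y : ℝ) (s : ℕ) : ℝ := (x.choose s : ℝ) * y ^ s * (1 - y) ^ (x - s)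

/-- Convolution of (mass) functions on `ℕ`. -/
def conv (f g : ℕ → ℝ) (s : ℕ) : ℝ := ∑ i ∈ Finset.range (s + 1), f i * g (s - i)

/-- Iterated convolution power: `convPow f j` is the `j`-fold convolution of `f`. -/
def convPow (f : ℕ → ℝ) : ℕ → ℕ → ℝ
  | 0 => fun s => if s = 0 then 1 else 0
  | j + 1 => conv f (convPow f j)

/-- The compound Poisson probability mass function `CPoi(lam, f)`, i.e. the law of
`H_1 + ⋯ + H_Λ` where `Λ ~ Poi(lam)` and the `H_k` are i.i.d. with mass function `f`,
independent of `Λ`. -/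
def cpoi (lam : ℝ) (f : ℕ → ℝ) (s : ℕ) : ℝ :=
  ∑' j : ℕ, Real.exp (-lam) * lam ^ j / (j.factorial : ℝ) * convPow f j s

/-- Convolution of (mass) functions on `ℕ × ℕ`. -/
def conv2 (F G : ℕ → ℕ → ℝ) (s t : ℕ) : ℝ :=
  ∑ i ∈ Finset.range (s + 1), ∑ j ∈ Finset.range (t + 1), F i j * G (s - i) (t - j)

/-- Point mass at `(1,1)`, as a mass function on `ℕ × ℕ`. -/
def delta11 (s t : ℕ) : ℝ := if s = 1 ∧ t = 1 then 1 else 0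

/-- The cross moment `Q_{rs} = E[(X)_r Y^s]` of a layer type distribution `Q`,
where `(x)_r` is the falling factorial. -/
def mom (Q : Measure (ℕ × ℝ)) (r s : ℕ) : ℝ :=
  ∫ p, (p.1.descFactorial r : ℝ) * p.2 ^ s ∂Q

/-- The increment distribution `g(s) = ∫ Bin(x-1,y)(s) x P(dx,dy) / P₁₀`. -/
def gInc (P : Measure (ℕ × ℝ)) (s : ℕ) : ℝ :=
  (∫ p, (p.1 : ℝ) * binP (p.1 - 1) p.2 s ∂P) / mom P 1 0

/-- The limiting degree distribution `\bar f_1 = CPoi(μ P₁₀, g)`. -/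
def barf1 (mu : ℝ) (P : Measure (ℕ × ℝ)) (s : ℕ) : ℝ :=
  cpoi (mu * mom P 1 0) (gInc P) s

/-- The distribution `f₂'` of `(D₁', D₂')`:
`f₂'(s,t) = ∫ Bin(x-2,y)(s) Bin(x-2,y)(t) (x)₂ y P(dx,dy) / P₂₁`. -/
def f2p (P : Measure (ℕ × ℝ)) (s t : ℕ) : ℝ :=
  (∫ p, (p.1.descFactorial 2 : ℝ) * p.2 * binP (p.1 - 2) p.2 s * binP (p.1 - 2) p.2 t ∂P) /
    mom P 2 1

/-- The limiting bidegree distribution `\bar f₂ = δ₍₁,₁₎ ∗ (\bar f₁ ⊗ \bar f₁) ∗ f₂'`. -/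
def barf2 (mu : ℝ) (P : Measure (ℕ × ℝ)) : ℕ → ℕ → ℝ :=
  conv2 (conv2 delta11 fun s t => barf1 mu P s * barf1 mu P t) (f2p P)

/-- Expectation of `φ(U⁽¹⁾,U⁽²⁾)` where `(U⁽¹⁾,U⁽²⁾)` has mass function `F` on `ℕ²`. -/
def pmean (F : ℕ → ℕ → ℝ) (φ : ℕ → ℕ → ℝ) : ℝ :=
  ∑' u : ℕ × ℕ, φ u.1 u.2 * F u.1 u.2

/-- Pearson correlation coefficient of a mass function `F` on `ℕ²`. -/
def pearson (F : ℕ → ℕ → ℝ) : ℝ :=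
  (pmean F (fun s t => (s : ℝ) * t) - pmean F (fun s _ => (s : ℝ)) * pmean F (fun _ t => (t : ℝ))) /
    (Real.sqrt (pmean F (fun s _ => (s : ℝ) ^ 2) - pmean F (fun s _ => (s : ℝ)) ^ 2) *
      Real.sqrt (pmean F (fun _ t => (t : ℝ) ^ 2) - pmean F (fun _ t => (t : ℝ)) ^ 2))

lemma hs_cv {ι : Type*} {f g : ι → ℝ} {a b : ℝ} (h : HasSum f a) (hfg : ∀ x, g x = f x)
    (hab : b = a) : HasSum g b := by
  rw [hab, show g = f from funext hfg]; exact h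

lemma hs_fiber {α β : Type*} (h : α → β) (f : α → ℝ) (a : ℝ) (hf : HasSum f a)
    (S : β → Finset α) (hS : ∀ b x, x ∈ S b ↔ h x = b) :
    HasSum (fun b => ∑ x ∈ S b, f x) a := by
  have h1 := (Equiv.sigmaFiberEquiv h).hasSum_iff.2 hf
  refine h1.sigma (fun b => ?_)
  have h2 := (S b).hasSum f
  let e : {x // h x = b} ≃ {x // x ∈ S b} := Equiv.subtypeEquivRight (fun x => (hS b x).symm)
  exact e.hasSum_iff.2 h2

lemma hs_mul {α β : Type*} {f : α → ℝ} {g : β → ℝ} {a b : ℝ} (hf : HasSum f a)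
    (hg : HasSum g b) : HasSum (fun p : α × β => f p.1 * g p.2) (a * b) :=
  hf.mul hg (summable_mul_of_summable_norm hf.summable.norm hg.summable.norm)

lemma hs_conv (f g φ : ℕ → ℝ) (a : ℝ)
    (h : HasSum (fun p : ℕ × ℕ => φ (p.1 + p.2) * (f p.1 * g p.2)) a) :
    HasSum (fun s => φ s * conv f g s) a := by
  have := hs_fiber (fun p : ℕ × ℕ => p.1 + p.2) _ a h
    (fun n => Finset.HasAntidiagonal.antidiagonal n) (by simp)
  convert this using 2 with s
  rw [conv, ← Finset.Nat.sum_antidiagonal_eq_sum_range_succ (fun i j => f i * g j),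
    Finset.mul_sum]
  refine Finset.sum_congr rfl (fun p hp => ?_)
  rw [Finset.HasAntidiagonal.mem_antidiagonal.1 hp]

lemma hs_conv2 (F G φ : ℕ → ℕ → ℝ) (a : ℝ)
    (h : HasSum (fun p : (ℕ × ℕ) × (ℕ × ℕ) =>
      φ (p.1.1 + p.2.1) (p.1.2 + p.2.2) * (F p.1.1 p.1.2 * G p.2.1 p.2.2)) a) :
    HasSum (fun u : ℕ × ℕ => φ u.1 u.2 * conv2 F G u.1 u.2) a := by
  have h' := (Equiv.prodProdProdComm ℕ ℕ ℕ ℕ).hasSum_iff.2 h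
  have := hs_fiber (fun p : (ℕ × ℕ) × (ℕ × ℕ) => (p.1.1 + p.1.2, p.2.1 + p.2.2)) _ a h'
    (fun u => Finset.HasAntidiagonal.antidiagonal u.1 ×ˢ Finset.HasAntidiagonal.antidiagonal u.2) (by
      rintro ⟨a, b⟩ ⟨⟨c, d⟩, ⟨e, f⟩⟩; simp)
  convert this using 2 with u
  rw [Finset.sum_product, conv2, Finset.mul_sum,
    Finset.Nat.sum_antidiagonal_eq_sum_range_succ_mk]
  refine Finset.sum_congr rfl (fun i hi => ?_)
  rw [Finset.mul_sum, Finset.Nat.sum_antidiagonal_eq_sum_range_succ_mk]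
  refine Finset.sum_congr rfl (fun j hj => ?_)
  have hi' : i + (u.1 - i) = u.1 := by have := Finset.mem_range.1 hi; omega
  have hj' : j + (u.2 - j) = u.2 := by have := Finset.mem_range.1 hj; omega
  simp [hi', hj']

/-- First moments of a 1D mass function. -/
structure HM1 (f : ℕ → ℝ) (a c : ℝ) : Prop where
  nn : ∀ s, 0 ≤ f s
  h0 : HasSum (fun s : ℕ => 1 * f s) 1
  h1 : HasSum (fun s : ℕ => (s : ℝ) * f s) a
  h2 : HasSum (fun s : ℕ => (s : ℝ) ^ 2 * f s) c

structure HM2 (F : ℕ → ℕ → ℝ) (a b c d e : ℝ) : Prop where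
  nn : ∀ s t, 0 ≤ F s t
  h0 : HasSum (fun u : ℕ × ℕ => 1 * F u.1 u.2) 1
  hs : HasSum (fun u : ℕ × ℕ => (u.1 : ℝ) * F u.1 u.2) a
  ht : HasSum (fun u : ℕ × ℕ => (u.2 : ℝ) * F u.1 u.2) b
  hss : HasSum (fun u : ℕ × ℕ => (u.1 : ℝ) ^ 2 * F u.1 u.2) c
  htt : HasSum (fun u : ℕ × ℕ => (u.2 : ℝ) ^ 2 * F u.1 u.2) d
  hst : HasSum (fun u : ℕ × ℕ => (u.1 : ℝ) * u.2 * F u.1 u.2) e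

lemma HM1.conv {f g : ℕ → ℝ} {a c a' c' : ℝ} (hf : HM1 f a c) (hg : HM1 g a' c') :
    HM1 (conv f g) (a + a') (c + 2 * a * a' + c') where
  nn s := Finset.sum_nonneg fun i _ => mul_nonneg (hf.nn _) (hg.nn _)
  h0 := by
    refine hs_conv f g (fun _ => 1) _ ?_
    refine hs_cv (hs_mul hf.h0 hg.h0) (fun p => ?_) ?_
    · ring
    · ring
  h1 := by
    refine hs_conv f g (fun s => (s : ℝ)) _ ?_
    refine hs_cv ((hs_mul hf.h1 hg.h0).add (hs_mul hf.h0 hg.h1)) (fun p => ?_) ?_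
    · push_cast; ring
    · ring
  h2 := by
    refine hs_conv f g (fun s => (s : ℝ) ^ 2) _ ?_
    refine hs_cv (((hs_mul hf.h2 hg.h0).add ((hs_mul hf.h1 hg.h1).mul_left 2)).add
      (hs_mul hf.h0 hg.h2)) (fun p => ?_) ?_
    · push_cast; ring
    · ring

lemma HM2.conv {F G : ℕ → ℕ → ℝ} {a b c d e a' b' c' d' e' : ℝ} (hf : HM2 F a b c d e)
    (hg : HM2 G a' b' c' d' e') :
    HM2 (conv2 F G) (a + a') (b + b') (c + 2 * a * a' + c') (d + 2 * b * b' + d')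
      (e + a * b' + b * a' + e') where
  nn s t := Finset.sum_nonneg fun i _ => Finset.sum_nonneg fun j _ =>
    mul_nonneg (hf.nn _ _) (hg.nn _ _)
  h0 := by
    refine hs_conv2 F G (fun _ _ => 1) _ ?_
    refine hs_cv (hs_mul hf.h0 hg.h0) (fun p => ?_) ?_
    · ring
    · ring
  hs := by
    refine hs_conv2 F G (fun s _ => (s : ℝ)) _ ?_
    refine hs_cv ((hs_mul hf.hs hg.h0).add (hs_mul hf.h0 hg.hs)) (fun p => ?_) ?_
    · push_cast; ring
    · ring
  ht := by
    refine hs_conv2 F G (fun _ s => (s : ℝ)) _ ?_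
    refine hs_cv ((hs_mul hf.ht hg.h0).add (hs_mul hf.h0 hg.ht)) (fun p => ?_) ?_
    · push_cast; ring
    · ring
  hss := by
    refine hs_conv2 F G (fun s _ => (s : ℝ) ^ 2) _ ?_
    refine hs_cv (((hs_mul hf.hss hg.h0).add ((hs_mul hf.hs hg.hs).mul_left 2)).add
      (hs_mul hf.h0 hg.hss)) (fun p => ?_) ?_
    · push_cast; ring
    · ring
  htt := by
    refine hs_conv2 F G (fun _ s => (s : ℝ) ^ 2) _ ?_
    refine hs_cv (((hs_mul hf.htt hg.h0).add ((hs_mul hf.ht hg.ht).mul_left 2)).add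
      (hs_mul hf.h0 hg.htt)) (fun p => ?_) ?_
    · push_cast; ring
    · ring
  hst := by
    refine hs_conv2 F G (fun s t => (s : ℝ) * t) _ ?_
    refine hs_cv ((((hs_mul hf.hst hg.h0).add (hs_mul hf.hs hg.ht)).add (hs_mul hf.ht hg.hs)).add
      (hs_mul hf.h0 hg.hst)) (fun p => ?_) ?_
    · push_cast; ring
    · ring

lemma HM1.prod {f g : ℕ → ℝ} {a c a' c' : ℝ} (hf : HM1 f a c) (hg : HM1 g a' c') :
    HM2 (fun s t => f s * g t) a a' c c' (a * a') where
  nn s t := mul_nonneg (hf.nn _) (hg.nn _)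
  h0 := hs_cv (hs_mul hf.h0 hg.h0) (fun p => by ring) (by ring)
  hs := hs_cv (hs_mul hf.h1 hg.h0) (fun p => by ring) (by ring)
  ht := hs_cv (hs_mul hf.h0 hg.h1) (fun p => by ring) (by ring)
  hss := hs_cv (hs_mul hf.h2 hg.h0) (fun p => by ring) (by ring)
  htt := hs_cv (hs_mul hf.h0 hg.h2) (fun p => by ring) (by ring)
  hst := hs_cv (hs_mul hf.h1 hg.h1) (fun p => by ring) (by ring)

lemma hm_delta : HM2 delta11 1 1 1 1 1 := by
  have key : ∀ φ : ℕ → ℕ → ℝ,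
      HasSum (fun u : ℕ × ℕ => φ u.1 u.2 * delta11 u.1 u.2) (φ 1 1) := by
    intro φ
    convert hasSum_single (f := fun u : ℕ × ℕ => φ u.1 u.2 * delta11 u.1 u.2) (1, 1) ?_ using 1
    · simp [delta11]
    · rintro ⟨s, t⟩ h
      simp only [ne_eq, Prod.mk.injEq] at h
      simp [delta11, h]
  refine ⟨fun s t => ?_, key fun _ _ => 1, ?_, ?_, ?_, ?_, ?_⟩
  · unfold delta11; split_ifs <;> norm_num
  · simpa using key fun s _ => (s : ℝ)
  · simpa using key fun _ s => (s : ℝ)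
  · exact hs_cv (key fun s _ => (s : ℝ) ^ 2) (fun _ => rfl) (by norm_num)
  · exact hs_cv (key fun _ s => (s : ℝ) ^ 2) (fun _ => rfl) (by norm_num)
  · simpa using key fun s t => (s : ℝ) * t

lemma hm_pow {f : ℕ → ℝ} {a c : ℝ} (hf : HM1 f a c) (j : ℕ) :
    HM1 (convPow f j) (j * a) (j * c + (j * (j - 1) : ℝ) * a ^ 2) := by
  induction j with
  | zero =>
    have key : ∀ φ : ℕ → ℝ, HasSum (fun u => φ u * convPow f 0 u) (φ 0) := by
      intro φ
      convert hasSum_single (f := fun u => φ u * convPow f 0 u) 0 ?_ using 1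
      · simp [convPow]
      · intro b hb
        simp [convPow, hb]
    refine ⟨fun s => ?_, key fun _ => 1, ?_, ?_⟩
    · simp only [convPow]; split_ifs <;> norm_num
    · simpa using key fun s => (s : ℝ)
    · exact hs_cv (key fun s => (s : ℝ) ^ 2) (fun _ => rfl) (by norm_num)
  | succ j ih =>
    have := hf.conv ih
    have e1 : ((j + 1 : ℕ) : ℝ) * a = a + j * a := by push_cast; ring
    have e2 : ((j + 1 : ℕ) : ℝ) * c + (((j + 1 : ℕ) : ℝ) * (((j + 1 : ℕ) : ℝ) - 1)) * a ^ 2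
        = c + 2 * a * (j * a) + (j * c + (j * (j - 1) : ℝ) * a ^ 2) := by push_cast; ring
    rw [e1, e2]; exact this

lemma hs_swap {a : ℕ → ℕ → ℝ} {b : ℕ → ℝ} {c : ℝ} (ha : ∀ j s, 0 ≤ a j s)
    (hb : ∀ j, HasSum (a j) (b j)) (hc : HasSum b c) :
    HasSum (fun s => ∑' j, a j s) c := by
  have hsum : Summable (fun p : ℕ × ℕ => a p.1 p.2) := by
    rw [summable_prod_of_nonneg (fun p => ha _ _)]
    refine ⟨fun j => (hb j).summable, ?_⟩
    simpa [(hb _).tsum_eq] using hc.summable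
  have h1 : HasSum (fun p : ℕ × ℕ => a p.1 p.2) c := by
    have := hsum.hasSum
    have h2 := this.prod_fiberwise hb
    rwa [h2.unique hc] at this
  have h3 := (Equiv.prodComm ℕ ℕ).hasSum_iff.2 h1
  refine h3.prod_fiberwise (fun s => ?_)
  exact (h3.summable.prod_factor s).hasSum

lemma poi0 (l : ℝ) : HasSum (fun j : ℕ => Real.exp (-l) * l ^ j / (j.factorial : ℝ)) 1 := by
  refine hs_cv ((NormedSpace.expSeries_div_hasSum_exp l).mul_left (Real.exp (-l))) ?_ ?_
  · intro j; ring
  · rw [← Real.exp_eq_exp_ℝ, ← Real.exp_add]; simp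

lemma poi1 (l : ℝ) :
    HasSum (fun j : ℕ => Real.exp (-l) * l ^ j / (j.factorial : ℝ) * j) l := by
  rw [← hasSum_nat_add_iff' 1]
  refine hs_cv ((poi0 l).mul_left l) ?_ ?_
  · intro j
    rw [Nat.factorial_succ]
    push_cast
    have : ((j : ℝ) + 1) ≠ 0 := by positivity
    field_simp
    ring
  · simp

lemma poi2 (l : ℝ) :
    HasSum (fun j : ℕ => Real.exp (-l) * l ^ j / (j.factorial : ℝ) * (j * (j - 1) : ℝ))
      (l ^ 2) := by
  rw [← hasSum_nat_add_iff' 1]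
  refine hs_cv ((poi1 l).mul_left l) ?_ ?_
  · intro j
    rw [Nat.factorial_succ]
    push_cast
    have : ((j : ℝ) + 1) ≠ 0 := by positivity
    field_simp
    ring
  · simp; ring

lemma hm_cpoi {f : ℕ → ℝ} {a c l : ℝ} (hl : 0 ≤ l) (hf : HM1 f a c) :
    HM1 (cpoi l f) (l * a) (l * c + l ^ 2 * a ^ 2) := by
  have key : ∀ (φ b : ℕ → ℝ) (x : ℝ), (∀ s, 0 ≤ φ s) →
      (∀ j, HasSum (fun s => φ s * convPow f j s) (b j)) →
      HasSum (fun j : ℕ => Real.exp (-l) * l ^ j / (j.factorial : ℝ) * b j) x →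
      HasSum (fun s => φ s * cpoi l f s) x := by
    intro φ b x hφ hb hx
    have := hs_swap
      (a := fun j s => Real.exp (-l) * l ^ j / (j.factorial : ℝ) * (φ s * convPow f j s))
      (fun j s => by have := (hm_pow hf j).nn s; have := hφ s; positivity)
      (fun j => (hb j).mul_left _) hx
    convert this using 2 with s
    rw [cpoi, ← tsum_mul_left]
    congr 1; ext j; ring
  refine ⟨fun s => ?_, ?_, ?_, ?_⟩
  · exact tsum_nonneg fun j => by have := (hm_pow hf j).nn s; positivity
  · exact key (fun _ => 1) _ _ (by simp) (fun j => (hm_pow hf j).h0) (by simpa using poi0 l)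
  · refine key (fun s => (s : ℝ)) _ _ (by simp) (fun j => (hm_pow hf j).h1) ?_
    exact hs_cv ((poi1 l).mul_right a) (fun j => by ring) rfl
  · refine key (fun s => (s : ℝ) ^ 2) _ _ (fun _ => by positivity)
      (fun j => (hm_pow hf j).h2) ?_
    exact hs_cv (((poi1 l).mul_right c).add ((poi2 l).mul_right (a ^ 2))) (fun j => by ring) rfl

lemma bin_eq (n : ℕ) (y : ℝ) (s : ℕ) : binP n y s = (bernsteinPolynomial ℝ n s).eval y := by
  simp [binP, bernsteinPolynomial]

lemma bin_nonneg (n : ℕ) {y : ℝ} (h0 : 0 ≤ y) (h1 : y ≤ 1) (s : ℕ) : 0 ≤ binP n y s := by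
  have : 0 ≤ 1 - y := by linarith
  unfold binP; positivity

lemma cast_mul_pred (n : ℕ) : ((n * (n - 1) : ℕ) : ℝ) = n * (n - 1) := by
  cases n <;> simp

lemma hm_bin (n : ℕ) {y : ℝ} (h0 : 0 ≤ y) (h1 : y ≤ 1) :
    HM1 (binP n y) (n * y) (n * (n - 1) * y ^ 2 + n * y) := by
  have key : ∀ φ : ℕ → ℝ, HasSum (fun s => φ s * binP n y s)
      (∑ s ∈ Finset.range (n + 1), φ s * binP n y s) := by
    intro φ
    refine hasSum_sum_of_ne_finset_zero (fun s hs => ?_)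
    have : n < s := by simpa using hs
    simp [binP, Nat.choose_eq_zero_of_lt this]
  have e0 : ∑ s ∈ Finset.range (n + 1), binP n y s = 1 := by
    have := congrArg (Polynomial.eval y) (bernsteinPolynomial.sum ℝ n)
    simpa [Polynomial.eval_finsetSum, ← bin_eq] using this
  have e1 : ∑ s ∈ Finset.range (n + 1), (s : ℝ) * binP n y s = n * y := by
    have := congrArg (Polynomial.eval y) (bernsteinPolynomial.sum_smul ℝ n)
    simpa [Polynomial.eval_finsetSum, ← bin_eq] using this
  have e2 : ∑ s ∈ Finset.range (n + 1), (s * (s - 1) : ℝ) * binP n y s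
      = n * (n - 1) * y ^ 2 := by
    have := congrArg (Polynomial.eval y) (bernsteinPolynomial.sum_mul_smul ℝ n)
    simp only [Polynomial.eval_finsetSum, nsmul_eq_mul, Polynomial.eval_mul,
      Polynomial.eval_natCast, ← bin_eq, cast_mul_pred, Polynomial.eval_pow, Polynomial.eval_X] at this
    exact this
  refine ⟨bin_nonneg n h0 h1, ?_, ?_, ?_⟩
  · refine hs_cv (key (fun _ => 1)) (fun _ => rfl) ?_
    simp [e0]
  · refine hs_cv (key (fun s => (s : ℝ))) (fun _ => rfl) ?_
    exact e1.symm
  · refine hs_cv (key (fun s => (s : ℝ) ^ 2)) (fun _ => rfl) ?_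
    rw [← e1, ← e2, ← Finset.sum_add_distrib]
    refine Finset.sum_congr rfl (fun s _ => by ring)

lemma hs_int {ι : Type*} [Countable ι] {P : Measure (ℕ × ℝ)} {F : ι → ℕ × ℝ → ℝ}
    {h : ℕ × ℝ → ℝ} (hm : ∀ i, Measurable (F i)) (hn : ∀ᵐ p ∂P, ∀ i, 0 ≤ F i p)
    (hs : ∀ᵐ p ∂P, HasSum (fun i => F i p) (h p)) (hi : Integrable h P) :
    HasSum (fun i => ∫ p, F i p ∂P) (∫ p, h p ∂P) := by
  refine hasSum_integral_of_dominated_convergence F (fun i => (hm i).aestronglyMeasurable)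
    (fun i => ?_) (hs.mono fun p hp => hp.summable) (hi.congr ?_) hs
  · filter_upwards [hn] with p hp
    rw [Real.norm_of_nonneg (hp i)]
  · filter_upwards [hs] with p hp
    exact hp.tsum_eq.symm

lemma meas_nat (f : ℕ → ℝ) : Measurable (fun p : ℕ × ℝ => f p.1) :=
  (measurable_of_countable f).comp measurable_fst

lemma meas_bin (k s : ℕ) : Measurable (fun p : ℕ × ℝ => binP (p.1 - k) p.2 s) := by
  refine measurable_from_prod_countable_right (fun n => ?_)
  simp only [binP]
  fun_prop

lemma int33 {P : Measure (ℕ × ℝ)} (hP : ∀ᵐ p ∂P, 0 ≤ p.2 ∧ p.2 ≤ 1)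
    (hint32 : Integrable (fun p : ℕ × ℝ => (p.1.descFactorial 3 : ℝ) * p.2 ^ (2:ℕ)) P) :
    Integrable (fun p : ℕ × ℝ => (p.1.descFactorial 3 : ℝ) * p.2 ^ (3:ℕ)) P := by
  refine hint32.mono' ?_ ?_
  · exact ((meas_nat fun n => (n.descFactorial 3 : ℝ)).mul
      (measurable_snd.pow_const 3)).aestronglyMeasurable
  · filter_upwards [hP] with p ⟨h0, h1⟩
    rw [Real.norm_of_nonneg (by positivity)]
    exact mul_le_mul_of_nonneg_left (pow_le_pow_of_le_one h0 h1 (by norm_num)) (by positivity)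

lemma hm_g {P : Measure (ℕ × ℝ)} (hP : ∀ᵐ p ∂P, 0 ≤ p.2 ∧ p.2 ≤ 1)
    (hint10 : Integrable (fun p : ℕ × ℝ => (p.1.descFactorial 1 : ℝ) * p.2 ^ (0:ℕ)) P)
    (hint21 : Integrable (fun p : ℕ × ℝ => (p.1.descFactorial 2 : ℝ) * p.2 ^ (1:ℕ)) P)
    (hint32 : Integrable (fun p : ℕ × ℝ => (p.1.descFactorial 3 : ℝ) * p.2 ^ (2:ℕ)) P)
    (h10pos : 0 < mom P 1 0) :
    HM1 (gInc P) (mom P 2 1 / mom P 1 0) ((mom P 3 2 + mom P 2 1) / mom P 1 0) := by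
  have key : ∀ (φ : ℕ → ℝ) (h : ℕ × ℝ → ℝ), (∀ s, 0 ≤ φ s) →
      (∀ p : ℕ × ℝ, 0 ≤ p.2 → p.2 ≤ 1 →
        HasSum (fun s => (p.1 : ℝ) * (φ s * binP (p.1 - 1) p.2 s)) (h p)) →
      Integrable h P → HasSum (fun s => φ s * gInc P s) ((∫ p, h p ∂P) / mom P 1 0) := by
    intro φ h hφ hs hi
    have := hs_int (P := P)
      (F := fun s p => (p.1 : ℝ) * (φ s * binP (p.1 - 1) p.2 s)) (h := h)
      (fun s => (meas_nat fun n => (n : ℝ)).mul ((meas_bin 1 s).const_mul _))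
      (by
        filter_upwards [hP] with p ⟨h0, h1⟩ s
        have := bin_nonneg (p.1 - 1) h0 h1 s
        have := hφ s
        positivity)
      (by filter_upwards [hP] with p ⟨h0, h1⟩ using hs p h0 h1) hi
    refine hs_cv (this.div_const (mom P 1 0)) (fun u => ?_) rfl
    rw [gInc, ← mul_div_assoc, ← integral_const_mul]
    congr 2; ext p; ring
  refine ⟨fun s => ?_, ?_, ?_, ?_⟩
  · refine div_nonneg (integral_nonneg_of_ae ?_) h10pos.le
    filter_upwards [hP] with p ⟨h0, h1⟩
    exact mul_nonneg (by positivity) (bin_nonneg _ h0 h1 s)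
  · refine hs_cv (key (fun _ => 1) _ (by simp) (fun p h0 h1 => ?_) hint10) (fun _ => rfl) ?_
    rotate_left
    · exact (div_self h10pos.ne').symm
    · refine hs_cv ((hm_bin (p.1 - 1) h0 h1).h0.mul_left (p.1 : ℝ)) (fun _ => rfl) ?_
      simp
  · refine hs_cv (key (fun s => (s : ℝ)) _ (by simp) (fun p h0 h1 => ?_) hint21) (fun _ => rfl) rfl
    refine hs_cv ((hm_bin (p.1 - 1) h0 h1).h1.mul_left (p.1 : ℝ)) (fun _ => rfl) ?_
    rcases p with ⟨_ | n, y⟩ <;> simp; ring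
  · refine hs_cv (key (fun s => (s : ℝ) ^ 2) _ (fun _ => by positivity) (fun p h0 h1 => ?_)
      (hint32.add hint21)) (fun _ => rfl) ?_
    rotate_left
    · simp only [Pi.add_apply]
      rw [integral_add hint32 hint21]; rfl
    · refine hs_cv ((hm_bin (p.1 - 1) h0 h1).h2.mul_left (p.1 : ℝ)) (fun _ => rfl) ?_
      rcases p with ⟨_ | _ | n, y⟩ <;> simp; ring

lemma hm_f2p {P : Measure (ℕ × ℝ)} (hP : ∀ᵐ p ∂P, 0 ≤ p.2 ∧ p.2 ≤ 1)
    (hint21 : Integrable (fun p : ℕ × ℝ => (p.1.descFactorial 2 : ℝ) * p.2 ^ (1:ℕ)) P)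
    (hint32 : Integrable (fun p : ℕ × ℝ => (p.1.descFactorial 3 : ℝ) * p.2 ^ (2:ℕ)) P)
    (hint43 : Integrable (fun p : ℕ × ℝ => (p.1.descFactorial 4 : ℝ) * p.2 ^ (3:ℕ)) P)
    (h21pos : 0 < mom P 2 1) :
    HM2 (f2p P) (mom P 3 2 / mom P 2 1) (mom P 3 2 / mom P 2 1)
      ((mom P 4 3 + mom P 3 2) / mom P 2 1) ((mom P 4 3 + mom P 3 2) / mom P 2 1)
      ((mom P 4 3 + mom P 3 3) / mom P 2 1) := by
  have hint33 := int33 hP hint32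
  have key : ∀ (φ : ℕ → ℕ → ℝ) (h : ℕ × ℝ → ℝ), (∀ s t, 0 ≤ φ s t) →
      (∀ p : ℕ × ℝ, 0 ≤ p.2 → p.2 ≤ 1 →
        HasSum (fun u : ℕ × ℕ => ((p.1.descFactorial 2 : ℝ) * p.2) *
          (φ u.1 u.2 * (binP (p.1 - 2) p.2 u.1 * binP (p.1 - 2) p.2 u.2))) (h p)) →
      Integrable h P →
      HasSum (fun u : ℕ × ℕ => φ u.1 u.2 * f2p P u.1 u.2) ((∫ p, h p ∂P) / mom P 2 1) := by
    intro φ h hφ hs hi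
    have := hs_int (P := P)
      (F := fun (u : ℕ × ℕ) p => ((p.1.descFactorial 2 : ℝ) * p.2) *
          (φ u.1 u.2 * (binP (p.1 - 2) p.2 u.1 * binP (p.1 - 2) p.2 u.2))) (h := h)
      (fun u => ((meas_nat fun n => (n.descFactorial 2 : ℝ)).mul measurable_snd).mul
        (((meas_bin 2 u.1).mul (meas_bin 2 u.2)).const_mul _))
      (by
        filter_upwards [hP] with p ⟨h0, h1⟩ u
        have := bin_nonneg (p.1 - 2) h0 h1 u.1
        have := bin_nonneg (p.1 - 2) h0 h1 u.2
        have := hφ u.1 u.2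
        positivity)
      (by filter_upwards [hP] with p ⟨h0, h1⟩ using hs p h0 h1) hi
    refine hs_cv (this.div_const (mom P 2 1)) (fun u => ?_) rfl
    rw [f2p, ← mul_div_assoc, ← integral_const_mul]
    congr 2; ext p; ring
  have hb : ∀ p : ℕ × ℝ, 0 ≤ p.2 → p.2 ≤ 1 → _ := fun p h0 h1 =>
    (hm_bin (p.1 - 2) h0 h1).prod (hm_bin (p.1 - 2) h0 h1)
  refine ⟨fun s t => ?_, ?_, ?_, ?_, ?_, ?_, ?_⟩
  · refine div_nonneg (integral_nonneg_of_ae ?_) h21pos.le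
    filter_upwards [hP] with p ⟨h0, h1⟩
    exact mul_nonneg (mul_nonneg (mul_nonneg (by positivity) h0) (bin_nonneg _ h0 h1 s))
      (bin_nonneg _ h0 h1 t)
  · refine hs_cv (key (fun _ _ => 1) _ (by simp) (fun p h0 h1 => ?_) hint21) (fun _ => rfl) ?_
    rotate_left
    · exact (div_self h21pos.ne').symm
    · refine hs_cv ((hb p h0 h1).h0.mul_left ((p.1.descFactorial 2 : ℝ) * p.2)) (fun _ => rfl) ?_
      simp
  · refine hs_cv (key (fun s _ => (s : ℝ)) _ (by simp) (fun p h0 h1 => ?_) hint32) (fun _ => rfl) rfl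
    refine hs_cv ((hb p h0 h1).hs.mul_left ((p.1.descFactorial 2 : ℝ) * p.2)) (fun _ => rfl) ?_
    rcases p with ⟨_ | _ | n, y⟩ <;> simp; ring
  · refine hs_cv (key (fun _ s => (s : ℝ)) _ (by simp) (fun p h0 h1 => ?_) hint32) (fun _ => rfl) rfl
    refine hs_cv ((hb p h0 h1).ht.mul_left ((p.1.descFactorial 2 : ℝ) * p.2)) (fun _ => rfl) ?_
    rcases p with ⟨_ | _ | n, y⟩ <;> simp; ring
  · refine hs_cv (key (fun s _ => (s : ℝ) ^ 2) _ (fun _ _ => by positivity) (fun p h0 h1 => ?_)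
      (hint43.add hint32)) (fun _ => rfl) ?_
    rotate_left
    · simp only [Pi.add_apply]
      rw [integral_add hint43 hint32]; rfl
    · refine hs_cv ((hb p h0 h1).hss.mul_left ((p.1.descFactorial 2 : ℝ) * p.2)) (fun _ => rfl) ?_
      rcases p with ⟨_ | _ | _ | n, y⟩ <;> simp; ring
  · refine hs_cv (key (fun _ s => (s : ℝ) ^ 2) _ (fun _ _ => by positivity) (fun p h0 h1 => ?_)
      (hint43.add hint32)) (fun _ => rfl) ?_
    rotate_left
    · simp only [Pi.add_apply]
      rw [integral_add hint43 hint32]; rfl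
    · refine hs_cv ((hb p h0 h1).htt.mul_left ((p.1.descFactorial 2 : ℝ) * p.2)) (fun _ => rfl) ?_
      rcases p with ⟨_ | _ | _ | n, y⟩ <;> simp; ring
  · refine hs_cv (key (fun s t => (s : ℝ) * t) _ (fun _ _ => by positivity) (fun p h0 h1 => ?_)
      (hint43.add hint33)) (fun _ => rfl) ?_
    rotate_left
    · simp only [Pi.add_apply]
      rw [integral_add hint43 hint33]; rfl
    · refine hs_cv ((hb p h0 h1).hst.mul_left ((p.1.descFactorial 2 : ℝ) * p.2)) (fun _ => rfl) ?_
      rcases p with ⟨_ | _ | _ | n, y⟩ <;> simp; ring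

lemma HM2.var_nonneg {F : ℕ → ℕ → ℝ} {a b c d e : ℝ} (h : HM2 F a b c d e) :
    0 ≤ c - a ^ 2 := by
  have := (h.hss.add (h.hs.mul_left (-2 * a))).add (h.h0.mul_left (a ^ 2))
  have h2 := this.nonneg (fun u => by
    have := mul_nonneg (sq_nonneg ((u.1 : ℝ) - a)) (h.nn u.1 u.2)
    linarith)
  linarith

/-- **Proposition 1** (Bloznelis–Karjalainen–Leskelä). For any `μ ∈ (0,∞)` and any
probability measure `P` on `ℤ₊ × [0,1]` with `0 < P₁₀, P₂₁ < ∞` and `P₃₂, P₄₃ < ∞`, the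
random variables `(D₁*, D₂*) = (1 + D₁ + D₁', 1 + D₂ + D₂')` (whose joint law is
`\bar f₂`) satisfy
`Cor(D₁*, D₂*) = [P₂₁(P₄₃+P₃₃) - P₃₂²] / [P₂₁(P₄₃+P₃₂) - P₃₂² + μ P₂₁²(P₂₁+P₃₂)]`. -/
theorem limiting_bidegree_correlation
    (mu : ℝ) (hmu : 0 < mu)
    (P : Measure (ℕ × ℝ)) [IsProbabilityMeasure P]
    (hPsupp : P {p : ℕ × ℝ | p.2 ∈ Set.Icc (0:ℝ) 1} = 1)
    (hint10 : Integrable (fun p : ℕ × ℝ => (p.1.descFactorial 1 : ℝ) * p.2 ^ (0:ℕ)) P)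
    (hint21 : Integrable (fun p : ℕ × ℝ => (p.1.descFactorial 2 : ℝ) * p.2 ^ (1:ℕ)) P)
    (hint32 : Integrable (fun p : ℕ × ℝ => (p.1.descFactorial 3 : ℝ) * p.2 ^ (2:ℕ)) P)
    (hint43 : Integrable (fun p : ℕ × ℝ => (p.1.descFactorial 4 : ℝ) * p.2 ^ (3:ℕ)) P)
    (h10pos : 0 < mom P 1 0) (h21pos : 0 < mom P 2 1) :
    pearson (barf2 mu P) =
      (mom P 2 1 * (mom P 4 3 + mom P 3 3) - mom P 3 2 ^ 2) /
        (mom P 2 1 * (mom P 4 3 + mom P 3 2) - mom P 3 2 ^ 2 +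
          mu * mom P 2 1 ^ 2 * (mom P 2 1 + mom P 3 2)) := by
  have hP : ∀ᵐ p ∂P, 0 ≤ p.2 ∧ p.2 ≤ 1 := by
    have hm : MeasurableSet {p : ℕ × ℝ | p.2 ∈ Set.Icc (0:ℝ) 1} :=
      measurable_snd measurableSet_Icc
    have := (prob_compl_eq_zero_iff hm).2 hPsupp
    exact measure_eq_zero_iff_ae_notMem.1 this |>.mono (fun p hp => by simpa using hp)
  have hg := hm_g hP hint10 hint21 hint32 h10pos
  have hf := hm_f2p hP hint21 hint32 hint43 h21pos
  have hc : HM1 (barf1 mu P) _ _ := hm_cpoi (mul_pos hmu h10pos).le hg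
  have H : HM2 (barf2 mu P) _ _ _ _ _ := (hm_delta.conv (hc.prod hc)).conv hf
  have hv := H.var_nonneg
  rw [pearson]
  simp only [pmean]
  rw [H.hst.tsum_eq, H.hs.tsum_eq, H.ht.tsum_eq, H.hss.tsum_eq, H.htt.tsum_eq,
    Real.mul_self_sqrt hv]
  have hA := h10pos.ne'
  have hB := h21pos.ne'
  generalize mom P 1 0 = A at *
  generalize mom P 2 1 = B at *
  generalize mom P 3 2 = C at *
  generalize mom P 4 3 = D at *
  generalize mom P 3 3 = E at *
  rw [← mul_div_mul_left _ _ (pow_ne_zero 2 hB)]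
  congr 1
  · field_simp
    ring
  · field_simp
    ring
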